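/- Let $-1 < u < 0$, let $x, x^-, t \in \mathbb{R}$, and let $g : (-1, u] \to \mathbb{R}$ be continuous. Define, for $\lambda \in (-1, u)$, $\phi(\lambda) = \sqrt{u - \lambda}\,(x - x^-) + \int_\lambda^u (g(\xi) + 6t)\sqrt{\xi - \lambda}\,d\xi$ and $\theta(\lambda) = \frac{1}{2\sqrt{u - \lambda}} \int_\lambda^u \frac{g(\xi)}{\sqrt{\xi - \lambda}}\,d\xi$. Then $\phi$ is differentiable on $(-1, u)$ with $\phi'(\lambda) = -\frac{x - x^-}{2\sqrt{u - \lambda}} - \sqrt{u - \lambda}\,\big(6t + \theta(\lambda)\big)$. -/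

import Mathlib

open Set MeasureTheory intervalIntegral

lemma inv_sqrt_eq_rpow (y : ℝ) : (√y)⁻¹ = y ^ (-(1 / 2) : ℝ) := by
  rcases le_or_gt 0 y with h | h
  · rw [Real.sqrt_eq_rpow, Real.rpow_neg h]
  · have hc : Real.cos (-(1 / 2) * Real.pi) = 0 := by
      rw [neg_mul, Real.cos_neg, one_div_mul_eq_div, Real.cos_pi_div_two]
    rw [Real.sqrt_eq_zero_of_nonpos h.le, Real.rpow_def_of_neg h, hc]
    simp

lemma intervalIntegrable_inv_sqrt_sub (l a b : ℝ) :
    IntervalIntegrable (fun ξ => (√(ξ - l))⁻¹) volume a b := by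
  simp_rw [inv_sqrt_eq_rpow]
  have h := (intervalIntegrable_rpow' (a := a - l) (b := b - l)
    (r := (-(1 / 2) : ℝ)) (by norm_num)).comp_sub_right l
  simpa using h

lemma intervalIntegrable_inv_sqrt_sub_left (l a b : ℝ) :
    IntervalIntegrable (fun ξ => (√(l - ξ))⁻¹) volume a b := by
  simp_rw [inv_sqrt_eq_rpow]
  have h := (intervalIntegrable_rpow' (a := l - a) (b := l - b)
    (r := (-(1 / 2) : ℝ)) (by norm_num)).comp_sub_left l
  simpa using h

lemma integral_inv_sqrt_sub {l u : ℝ} :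
    ∫ ξ in l..u, (√(ξ - l))⁻¹ = 2 * √(u - l) := by
  simp_rw [inv_sqrt_eq_rpow]
  rw [integral_comp_sub_right (fun y => y ^ (-(1 / 2) : ℝ)) l,
    integral_rpow (Or.inl (by norm_num)), Real.sqrt_eq_rpow]
  norm_num
  ring

lemma abs_sqrt_sub_sqrt_le (a : ℝ) {b : ℝ} (hb : b ≠ 0) :
    |√a - √b| ≤ ((√b)⁻¹ + (√(-b))⁻¹) * |a - b| := by
  rcases lt_or_gt_of_ne hb with h | h
  · have hs : 0 < √(-b) := Real.sqrt_pos.2 (by linarith)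
    rw [Real.sqrt_eq_zero_of_nonpos h.le, inv_zero, zero_add, sub_zero,
      abs_of_nonneg (Real.sqrt_nonneg a), inv_mul_eq_div, le_div_iff₀ hs]
    rcases le_or_gt a 0 with ha | ha
    · rw [Real.sqrt_eq_zero_of_nonpos ha, zero_mul]
      exact abs_nonneg _
    · rw [abs_of_pos (by linarith)]
      nlinarith [Real.sq_sqrt ha.le, Real.sq_sqrt (neg_pos.2 h).le, sq_nonneg (√a - √(-b))]
  · have hs : 0 < √b := Real.sqrt_pos.2 h
    rw [Real.sqrt_eq_zero_of_nonpos (neg_neg_of_pos h).le, inv_zero, add_zero, inv_mul_eq_div,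
      le_div_iff₀ hs]
    rcases le_or_gt a 0 with ha | ha
    · rw [Real.sqrt_eq_zero_of_nonpos ha, zero_sub, abs_neg, abs_of_pos hs,
        Real.mul_self_sqrt h.le, abs_of_neg (by linarith)]
      linarith
    · have e : a - b = (√a - √b) * (√a + √b) := by
        nlinarith [Real.sq_sqrt ha.le, Real.sq_sqrt h.le]
      rw [e, abs_mul]
      gcongr
      rw [abs_of_nonneg (by positivity)]
      linarith [Real.sqrt_nonneg a]

lemma hasDerivAt_sqrt_const_sub {ξ l : ℝ} (h : ξ ≠ l) :
    HasDerivAt (fun m => √(ξ - m)) (-(1 / 2) * (√(ξ - l))⁻¹) l := by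
  have h1 := ((hasDerivAt_id l).const_sub ξ).sqrt (sub_ne_zero.2 h)
  refine h1.congr_deriv ?_
  simp only [id_eq, div_eq_mul_inv, mul_inv]
  ring

lemma integral_mul_eq_of_eq_zero_left {h : ℝ → ℝ} {a m u : ℝ} {s : ℝ → ℝ} (ham : a ≤ m) (hmu : m ≤ u)
    (hs : ∀ ξ ≤ m, s ξ = 0) (hi : IntervalIntegrable (fun ξ => h ξ * s ξ) volume a u) :
    ∫ ξ in a..u, h ξ * s ξ = ∫ ξ in m..u, h ξ * s ξ := by
  have hm : m ∈ uIcc a u := by rw [uIcc_of_le (ham.trans hmu)]; exact ⟨ham, hmu⟩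
  rw [← integral_add_adjacent_intervals (hi.mono_set (uIcc_subset_uIcc_left hm))
    (hi.mono_set (uIcc_subset_uIcc_right hm)), add_eq_right]
  refine integral_zero_ae (Filter.Eventually.of_forall fun ξ hξ => ?_)
  rw [uIoc_of_le ham] at hξ
  rw [hs ξ hξ.2, mul_zero]

theorem hasDerivAt_integral_mul_sqrt_sub {h : ℝ → ℝ} {a l u : ℝ} (hal : a < l) (hlu : l < u)
    (hh : ContinuousOn h (Icc a u)) :
    HasDerivAt (fun m => ∫ ξ in m..u, h ξ * √(ξ - m))
      (-(1 / 2) * ∫ ξ in l..u, h ξ * (√(ξ - l))⁻¹) l := by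
  have hau : a < u := hal.trans hlu
  rw [← uIcc_of_le hau.le] at hh
  have hF (m : ℝ) : IntervalIntegrable (fun ξ => h ξ * √(ξ - m)) volume a u :=
    (hh.mul (by fun_prop)).intervalIntegrable
  have hI := (intervalIntegrable_inv_sqrt_sub l a u).continuousOn_mul hh
  have hF' : IntervalIntegrable (fun ξ => h ξ * (-(1 / 2) * (√(ξ - l))⁻¹)) volume a u :=
    ((intervalIntegrable_inv_sqrt_sub l a u).const_mul _).continuousOn_mul hh
  have hB := ((intervalIntegrable_inv_sqrt_sub l a u).add
    (intervalIntegrable_inv_sqrt_sub_left l a u)).continuousOn_mul hh.abs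
  have hne : ∀ᵐ ξ : ℝ ∂volume.restrict (Ioc a u), ξ ≠ l :=
    ae_restrict_of_ae (Measure.ae_ne volume l)
  rw [intervalIntegrable_iff_integrableOn_Ioc_of_le hau.le] at hF' hB
  have key := hasFDerivAt_integral_of_dominated_loc_of_lip' (𝕜 := ℝ)
    (μ := volume.restrict (Ioc a u)) (F := fun m ξ => h ξ * √(ξ - m))
    (F' := fun ξ => ContinuousLinearMap.toSpanSingleton ℝ (h ξ * (-(1 / 2) * (√(ξ - l))⁻¹)))
    (x₀ := l) (s := univ) (bound := fun ξ => |h ξ| * ((√(ξ - l))⁻¹ + (√(l - ξ))⁻¹))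
    Filter.univ_mem
    (fun m _ => ((intervalIntegrable_iff_integrableOn_Ioc_of_le hau.le).1
      (hF m)).aestronglyMeasurable)
    ((intervalIntegrable_iff_integrableOn_Ioc_of_le hau.le).1 (hF l))
    ((ContinuousLinearMap.toSpanSingletonCLE (𝕜 := ℝ)
      (E := ℝ)).continuous.comp_aestronglyMeasurable hF'.aestronglyMeasurable)
    (by
      filter_upwards [hne] with ξ hξ m _
      have := abs_sqrt_sub_sqrt_le (ξ - m) (sub_ne_zero.2 hξ)
      rw [neg_sub, sub_sub_sub_cancel_left, abs_sub_comm l m] at this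
      rw [← mul_sub, norm_mul, mul_assoc, Real.norm_eq_abs, Real.norm_eq_abs, Real.norm_eq_abs]
      gcongr)
    hB
    (by
      filter_upwards [hne] with ξ hξ
      exact ((hasDerivAt_sqrt_const_sub hξ).const_mul (h ξ)).hasFDerivAt)
  have key' := key.2.hasDerivAt
  rw [ContinuousLinearMap.integral_apply key.1] at key'
  simp only [ContinuousLinearMap.toSpanSingleton_apply, one_smul] at key'
  rw [← integral_of_le hau.le] at key'
  have hD : ∫ ξ in a..u, h ξ * (-(1 / 2) * (√(ξ - l))⁻¹)
      = -(1 / 2) * ∫ ξ in l..u, h ξ * (√(ξ - l))⁻¹ := by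
    rw [← integral_mul_eq_of_eq_zero_left hal.le hlu.le (fun ξ hξ => by
      rw [Real.sqrt_eq_zero_of_nonpos (sub_nonpos.2 hξ), inv_zero]) hI,
      ← intervalIntegral.integral_const_mul]
    exact integral_congr fun ξ _ => by ring
  rw [hD] at key'
  refine key'.congr_of_eventuallyEq ?_
  filter_upwards [Ioo_mem_nhds hal hlu] with m hm
  rw [← integral_of_le hau.le]
  exact (integral_mul_eq_of_eq_zero_left hm.1.le hm.2.le
    (fun ξ hξ => Real.sqrt_eq_zero_of_nonpos (sub_nonpos.2 hξ)) (hF m)).symm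



/-- Equation (3.24) of the paper: the derivative of the phase
`φ(λ) = √(u-λ)(x-x⁻) + ∫_λ^u (g(ξ)+6t)√(ξ-λ) dξ` equals
`-(x-x⁻)/(2√(u-λ)) - √(u-λ)(6t + θ(λ))`. -/
theorem stmt4 (u x xm t : ℝ) (hu1 : -1 < u) (hu0 : u < 0)
    (g : ℝ → ℝ) (hg : ContinuousOn g (Set.Ioc (-1) u))
    (φ θ : ℝ → ℝ)
    (hφ : ∀ l ∈ Set.Ioo (-1 : ℝ) u,
      φ l = Real.sqrt (u - l) * (x - xm) + ∫ ξ in l..u, (g ξ + 6 * t) * Real.sqrt (ξ - l))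
    (hθ : ∀ l ∈ Set.Ioo (-1 : ℝ) u,
      θ l = (1 / (2 * Real.sqrt (u - l))) * ∫ ξ in l..u, g ξ / Real.sqrt (ξ - l)) :
    ∀ l ∈ Set.Ioo (-1 : ℝ) u,
      HasDerivAt φ
        (-(x - xm) / (2 * Real.sqrt (u - l)) - Real.sqrt (u - l) * (6 * t + θ l)) l := by
  intro l hl
  obtain ⟨a, ha, hal⟩ := exists_between hl.1
  have hgc : ContinuousOn g (Icc a u) := hg.mono fun ξ hξ => ⟨ha.trans_le hξ.1, hξ.2⟩
  have hs : 0 < √(u - l) := Real.sqrt_pos.2 (sub_pos.2 hl.2)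
  have hgl : ContinuousOn g (uIcc l u) := by
    rw [uIcc_of_le hl.2.le]
    exact hgc.mono (Icc_subset_Icc_left hal.le)
  have hd := ((hasDerivAt_sqrt_const_sub hl.2.ne').mul_const (x - xm)).add
    (hasDerivAt_integral_mul_sqrt_sub (h := fun ξ => g ξ + 6 * t) hal hl.2
      (hgc.add continuousOn_const))
  have hsplit : ∫ ξ in l..u, (g ξ + 6 * t) * (√(ξ - l))⁻¹
      = (∫ ξ in l..u, g ξ / √(ξ - l)) + 6 * t * (2 * √(u - l)) := by
    have hi := intervalIntegrable_inv_sqrt_sub l l u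
    simp_rw [add_mul, div_eq_mul_inv]
    rw [intervalIntegral.integral_add (hi.continuousOn_mul hgl) (hi.const_mul _),
      intervalIntegral.integral_const_mul, integral_inv_sqrt_sub]
  rw [hsplit] at hd
  have hφ' := hd.congr_of_eventuallyEq
    (Filter.eventually_of_mem (Ioo_mem_nhds hl.1 hl.2) fun m hm => hφ m hm)
  refine hφ'.congr_deriv ?_
  rw [hθ l hl]
  field_simp
  ring
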